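/- Let D be a bounded domain in ℂⁿ, and let U and V be open neighborhoods of ∂D such that the closure of V is a compact subset of U. Then there exists a constant c > 0 such that for every connected component D' of D ∩ U and all z, w ∈ D' ∩ V one has c·k_{D'}(z,w) ≤ k_D(z,w). -/

import Mathlib

open Metric Set

noncomputable section

/-- Inverse hyperbolic tangent: `artanh t = (1/2) * log ((1+t)/(1-t))`. -/
def artanh (x : ℝ) : ℝ := Real.log ((1 + x) / (1 - x)) / 2

variable {E : Type*} [NormedAddCommGroup E] [NormedSpace ℂ E]

/-- The Lempert function of a set `D ⊆ E`:
`l_D(z,w) = inf { artanh |α| : ∃ φ : 𝔻 → D holomorphic, φ 0 = z, φ α = w }`. -/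
def lempert (D : Set E) (z w : E) : ℝ :=
  sInf { r : ℝ | ∃ α : ℂ, ‖α‖ < 1 ∧
    (∃ φ : ℂ → E, DifferentiableOn ℂ φ (ball 0 1) ∧ MapsTo φ (ball 0 1) D ∧
      φ 0 = z ∧ φ α = w) ∧ r = artanh ‖α‖ }

/-- The Kobayashi pseudodistance: infimum of `∑ l_D(z_{i-1}, z_i)` over all finite
chains of points `z = c 0, c 1, …, c m = w` in `D`. -/
def kobayashi (D : Set E) (z w : E) : ℝ :=
  sInf { r : ℝ | ∃ (m : ℕ) (c : ℕ → E), c 0 = z ∧ c m = w ∧ (∀ i ≤ m, c i ∈ D) ∧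
    r = ∑ i ∈ Finset.range m, lempert D (c i) (c (i + 1)) }

/-- The Carathéodory pseudodistance:
`c_D(z,w) = sup { artanh |f w| : f : D → 𝔻 holomorphic, f z = 0 }`. -/
def caratheodory (D : Set E) (z w : E) : ℝ :=
  sSup { r : ℝ | ∃ f : E → ℂ, DifferentiableOn ℂ f D ∧ MapsTo f D (ball 0 1) ∧
    f z = 0 ∧ r = artanh ‖f w‖ }

/-- `(D, d)` is Gromov hyperbolic if
`sup_{p,q,x,w ∈ D} ( min{(p,x)_w, (x,q)_w} − (p,q)_w ) < ∞`, where
`(x,y)_z = d x z + d z y - d x y` is the Gromov product. -/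
def GromovHyperbolicWith (D : Set E) (d : E → E → ℝ) : Prop :=
  ∃ C : ℝ, ∀ p ∈ D, ∀ q ∈ D, ∀ x ∈ D, ∀ w ∈ D,
    min (d p w + d w x - d p x) (d x w + d w q - d x q) - (d p w + d w q - d p q) ≤ C

end

lemma my_artanh_tanh (t : ℝ) : artanh (Real.tanh t) = t := by
  have h := Real.artanh_tanh t
  rw [Real.artanh_eq_half_log ⟨(Real.neg_one_lt_tanh t).le, (Real.tanh_lt_one t).le⟩] at h
  unfold artanh
  linarith

lemma my_tanh_artanh {x : ℝ} (h0 : 0 ≤ x) (h1 : x < 1) : Real.tanh (artanh x) = x := by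
  have h := Real.tanh_artanh (x := x) ⟨by linarith, h1⟩
  rw [Real.artanh_eq_half_log ⟨by linarith, h1.le⟩] at h
  unfold artanh
  rw [← h]
  congr 1
  rw [h]; ring

lemma my_artanh_le {x : ℝ} (h0 : 0 ≤ x) (h1 : x ≤ 1 / 2) : artanh x ≤ 2 * x := by
  unfold artanh
  have hp : 0 < (1 + x) / (1 - x) := div_pos (by linarith) (by linarith)
  have h := Real.log_le_sub_one_of_pos hp
  have h2 : (1 + x) / (1 - x) ≤ 1 + 4 * x := by
    rw [div_le_iff₀ (by linarith)]; nlinarith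
  linarith

lemma my_half_le_artanh {x : ℝ} (h0 : 0 ≤ x) (h1 : x < 1) : x ≤ 2 * artanh x := by
  unfold artanh
  have hp : 0 < (1 + x) / (1 - x) := div_pos (by linarith) (by linarith)
  have h := Real.one_sub_inv_le_log_of_pos hp
  have h2 : x ≤ 1 - ((1 + x) / (1 - x))⁻¹ := by
    rw [inv_div, le_sub_iff_add_le, ← le_sub_iff_add_le', div_le_iff₀ (by linarith)]; nlinarith
  linarith

lemma my_artanh_nonneg {x : ℝ} (h0 : 0 ≤ x) (h1 : x < 1) : 0 ≤ artanh x := by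
  have := my_half_le_artanh h0 h1
  linarith

lemma my_tanh_nonneg {t : ℝ} (h0 : 0 ≤ t) : 0 ≤ Real.tanh t := by
  rw [Real.tanh_eq_sinh_div_cosh]
  exact div_nonneg (Real.sinh_nonneg_iff.2 h0) (Real.cosh_pos t).le

lemma my_tanh_le {t : ℝ} (h0 : 0 ≤ t) : Real.tanh t ≤ 2 * t := by
  have := my_half_le_artanh (my_tanh_nonneg h0) (Real.tanh_lt_one t)
  rwa [my_artanh_tanh] at this

lemma my_tanh_add (s t : ℝ) :
    Real.tanh (s + t) = (Real.tanh s + Real.tanh t) / (1 + Real.tanh t * Real.tanh s) := by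
  have hs := (Real.cosh_pos s).ne'
  have ht := (Real.cosh_pos t).ne'
  have hst := (Real.cosh_pos (s + t)).ne'
  have hd : 1 + Real.tanh t * Real.tanh s ≠ 0 := by
    have h1 := Real.abs_tanh_lt_one s
    have h2 := Real.abs_tanh_lt_one t
    have h3 : |Real.tanh t * Real.tanh s| < 1 := by
      rw [abs_mul]; nlinarith [abs_nonneg (Real.tanh s), abs_nonneg (Real.tanh t)]
    have := (abs_lt.1 h3).1
    linarith
  rw [eq_div_iff hd]
  simp only [Real.tanh_eq_sinh_div_cosh] at *
  rw [Real.cosh_add] at hst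
  rw [Real.cosh_add, Real.sinh_add]
  have hst' : Real.cosh t * Real.cosh s + Real.sinh s * Real.sinh t ≠ 0 := by
    rwa [mul_comm (Real.cosh t)]
  field_simp

section
variable {E : Type*} [NormedAddCommGroup E] [NormedSpace ℂ E]

lemma exists_poly {D : Set E} (hD : IsOpen D) (hc : IsConnected D) {a b : E}
    (ha : a ∈ D) (hb : b ∈ D) : ∃ P : ℂ → E, Differentiable ℂ P ∧ P 0 = a ∧ P 1 = b ∧
      ∀ x ∈ Icc (0 : ℝ) 1, P x ∈ D := by
  obtain ⟨γ, hγ⟩ := (hD.isConnected_iff_isPathConnected.1 hc).joinedIn a ha b hb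
  let f : C(unitInterval, E) := γ.toContinuousMap
  have hK : IsCompact (range f) := isCompact_range f.continuous
  obtain ⟨ε, hε, hεD⟩ := hK.exists_thickening_subset_open hD (by rintro _ ⟨t, rfl⟩; exact hγ t)
  have hu := bernsteinApproximation_uniform f
  obtain ⟨m, hm, hm0⟩ := ((Metric.tendsto_nhds.1 hu ε hε).and (Filter.eventually_ne_atTop 0)).exists
  let P : ℂ → E := fun ζ => ∑ k : Fin (m + 1),
    ((m.choose k : ℂ) * ζ ^ (k : ℕ) * (1 - ζ) ^ (m - (k : ℕ))) • f (bernstein.z k)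
  have hP : ∀ x : unitInterval, P (x : ℝ) = bernsteinApproximation m f x := by
    intro x
    rw [bernsteinApproximation.apply]
    refine Finset.sum_congr rfl fun k _ => ?_
    rw [bernstein_apply, ← Complex.coe_smul]
    congr 1
    push_cast
    rfl
  refine ⟨P, ?_, ?_, ?_, ?_⟩
  · fun_prop
  · have := hP 0
    rw [bernsteinApproximation.apply_zero] at this
    simpa [f] using this
  · have := hP 1
    rw [bernsteinApproximation.apply_one hm0] at this
    simpa [f] using this
  · intro x hx
    rw [hP ⟨x, hx⟩]
    apply hεD
    rw [mem_thickening_iff]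
    exact ⟨f ⟨x, hx⟩, mem_range_self _, (ContinuousMap.dist_apply_le_dist _).trans_lt hm⟩

lemma one_add_div_slit {ζ : ℂ} (h : ‖ζ‖ < 1) : (1 + ζ) / (1 - ζ) ∈ Complex.slitPlane := by
  have h1 : (1 - ζ) ≠ 0 := by
    intro h0
    have : ζ = 1 := (sub_eq_zero.1 h0).symm
    simp [this] at h
  left
  rw [Complex.div_re, ← add_div]
  apply div_pos _ (Complex.normSq_pos.2 h1)
  have h2 : ζ.re * ζ.re + ζ.im * ζ.im < 1 := by
    rw [← Complex.normSq_apply, Complex.normSq_eq_norm_sq]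
    nlinarith [norm_nonneg ζ]
  simp
  nlinarith

lemma exists_strip (ε : ℝ) (hε : 0 < ε) : ∃ δ : ℝ, 0 < δ ∧ ∀ ζ : ℂ, |ζ.im| ≤ δ →
    ∃ x ∈ Icc (0 : ℝ) 1, ‖(1 - Complex.cos ζ) / 2 - x‖ < ε := by
  have hcont : Continuous fun y : ℝ => (|Real.cosh y - 1| + |Real.sinh y|) := by
    have := Real.continuous_cosh
    have := Real.continuous_sinh
    fun_prop
  have h0 := (Metric.continuous_iff.1 hcont) 0 ε hε
  obtain ⟨δ, hδ, h⟩ := h0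
  refine ⟨δ / 2, by positivity, fun ζ hζ => ⟨(1 - Real.cos ζ.re) / 2, ?_, ?_⟩⟩
  · constructor <;> linarith [Real.cos_le_one ζ.re, Real.neg_one_le_cos ζ.re]
  · have hy := h ζ.im (by rw [Real.dist_eq, sub_zero]; linarith)
    simp at hy
    rw [abs_of_nonneg (by positivity)] at hy
    have e : (1 - Complex.cos ζ) / 2 - (((1 - Real.cos ζ.re) / 2 : ℝ) : ℂ)
        = (((-(Real.cos ζ.re) * (Real.cosh ζ.im - 1)) / 2 : ℝ) : ℂ) +
          ((Real.sin ζ.re * Real.sinh ζ.im / 2 : ℝ) : ℂ) * Complex.I := by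
      rw [Complex.cos_eq ζ]
      push_cast
      ring
    rw [e]
    refine (norm_add_le _ _).trans_lt ?_
    rw [norm_mul, Complex.norm_I, mul_one, Complex.norm_real, Complex.norm_real, Real.norm_eq_abs,
      Real.norm_eq_abs, abs_div, abs_div, abs_mul, abs_mul, abs_neg, abs_two]
    have h1 := Real.abs_cos_le_one ζ.re
    have h2 := Real.abs_sin_le_one ζ.re
    have h3 : |Real.cos ζ.re| * |Real.cosh ζ.im - 1| ≤ |Real.cosh ζ.im - 1| :=
      mul_le_of_le_one_left (abs_nonneg _) h1
    have h4 : |Real.sin ζ.re| * |Real.sinh ζ.im| ≤ |Real.sinh ζ.im| :=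
      mul_le_of_le_one_left (abs_nonneg _) h2
    have := abs_nonneg (Real.cosh ζ.im - 1)
    have := abs_nonneg (Real.sinh ζ.im)
    linarith

lemma exists_disc {D : Set E} (hD : IsOpen D) (hc : IsConnected D) {a b : E}
    (ha : a ∈ D) (hb : b ∈ D) : ∃ α : ℂ, ‖α‖ < 1 ∧
    ∃ φ : ℂ → E, DifferentiableOn ℂ φ (ball 0 1) ∧ MapsTo φ (ball 0 1) D ∧
      φ 0 = a ∧ φ α = b := by
  obtain ⟨P, hP, hP0, hP1, hPD⟩ := exists_poly hD hc ha hb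
  have hK : IsCompact ((fun x : ℝ => (x : ℂ)) '' Icc 0 1) :=
    isCompact_Icc.image Complex.continuous_ofReal
  obtain ⟨ε, hε, hεD⟩ := hK.exists_thickening_subset_open (hD.preimage hP.continuous)
    (by rintro _ ⟨t, ht, rfl⟩; exact hPD t ht)
  obtain ⟨δ, hδ, hs⟩ := exists_strip ε hε
  let s : ℝ := δ / Real.pi
  have hspos : 0 < s := div_pos hδ Real.pi_pos
  let R : ℝ := Real.exp (Real.pi / s)
  have hR : 0 < R := Real.exp_pos _
  have hR1 : 1 ≤ R := Real.one_le_exp (by have := Real.pi_pos; positivity)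
  refine ⟨(((R - 1) / (R + 1) : ℝ) : ℂ), ?_, fun ζ =>
    P ((1 - Complex.cos (s * Complex.log ((1 + ζ) / (1 - ζ)))) / 2), ?_, ?_, ?_, ?_⟩
  · rw [Complex.norm_real, Real.norm_eq_abs, abs_of_nonneg (div_nonneg (by linarith) (by linarith)),
      div_lt_one (by linarith)]
    linarith
  · intro ζ hζ
    rw [mem_ball_zero_iff] at hζ
    have h1 : (1 - ζ) ≠ 0 := by
      intro h0
      have : ζ = 1 := (sub_eq_zero.1 h0).symm
      simp [this] at hζ
    apply DifferentiableAt.differentiableWithinAt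
    have hl : DifferentiableAt ℂ (fun ζ : ℂ => Complex.log ((1 + ζ) / (1 - ζ))) ζ := by
      have hq : DifferentiableAt ℂ (fun ζ : ℂ => (1 + ζ) / (1 - ζ)) ζ :=
        DifferentiableAt.div (by fun_prop) (by fun_prop) h1
      exact hq.clog (one_add_div_slit hζ)
    have hin : DifferentiableAt ℂ (fun ζ : ℂ =>
        (1 - Complex.cos (s * Complex.log ((1 + ζ) / (1 - ζ)))) / 2) ζ := by
      have := (hl.const_mul (s : ℂ)).ccos
      exact (this.const_sub 1).div_const 2
    exact (hP _).comp ζ hin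
  · intro ζ hζ
    obtain ⟨x, hx, hxε⟩ := hs (s * Complex.log ((1 + ζ) / (1 - ζ))) (by
      rw [Complex.im_ofReal_mul, abs_mul, abs_of_pos hspos, Complex.log_im]
      calc s * _ ≤ s * Real.pi := by gcongr; exact Complex.abs_arg_le_pi _
        _ = δ := by simp [s, Real.pi_ne_zero])
    apply hεD
    rw [mem_thickening_iff]
    exact ⟨x, ⟨x, hx, rfl⟩, by rw [dist_eq_norm]; exact hxε⟩
  · simp [hP0]
  · have e1 : (1 + (((R - 1) / (R + 1) : ℝ) : ℂ)) / (1 - (((R - 1) / (R + 1) : ℝ) : ℂ)) = (R : ℝ) := by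
      have h : (1 + (R - 1) / (R + 1)) / (1 - (R - 1) / (R + 1)) = R := by
        have : R + 1 ≠ 0 := by linarith
        field_simp
        ring
      exact_mod_cast congrArg (fun x : ℝ => (x : ℂ)) h
    have e2 : Complex.log (R : ℂ) = ((Real.pi / s : ℝ) : ℂ) := by
      rw [← Complex.ofReal_log hR.le]; simp [R]
    have e3 : (s : ℂ) * ((Real.pi / s : ℝ) : ℂ) = (Real.pi : ℂ) := by
      rw [← Complex.ofReal_mul]; congr 1; field_simp
    simp only [e1, e2, e3]
    rw [Complex.cos_pi]
    convert hP1 using 2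
    norm_num

end

section
variable {E : Type*} [NormedAddCommGroup E] [NormedSpace ℂ E]

/-- One small step along an analytic disc. -/
def DStep (D : Set E) (δ : ℝ) (a b : E) (t : ℝ) : Prop :=
  0 ≤ t ∧ t ≤ δ ∧ ∃ φ : ℂ → E, DifferentiableOn ℂ φ (ball 0 1) ∧ MapsTo φ (ball 0 1) D ∧
      φ 0 = a ∧ φ (Real.tanh t : ℂ) = b

/-- Chains of small steps. -/
inductive DChain (D : Set E) (δ : ℝ) : E → E → ℝ → Prop
  | nil (a : E) : DChain D δ a a 0
  | cons {a b c : E} {t T : ℝ} : DStep D δ a b t → DChain D δ b c T → DChain D δ a c (t + T)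

lemma DChain.append {D : Set E} {δ : ℝ} {a b c : E} {S T : ℝ} (h1 : DChain D δ a b S)
    (h2 : DChain D δ b c T) : DChain D δ a c (S + T) := by
  induction h1 with
  | nil a => simpa using h2
  | cons hs _ ih => rw [add_assoc]; exact DChain.cons hs (ih h2)

lemma aut_maps {s : ℝ} (h0 : 0 ≤ s) (h1 : s < 1) {ζ : ℂ} (hζ : ‖ζ‖ < 1) :
    (1 + (s : ℂ) * ζ) ≠ 0 ∧ ‖(ζ + s) / (1 + s * ζ)‖ < 1 := by
  have hd : (1 + (s : ℂ) * ζ) ≠ 0 := by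
    intro h
    have h2 : ‖(s : ℂ) * ζ‖ = 1 := by
      rw [show (s : ℂ) * ζ = -1 by linear_combination h]; simp
    rw [norm_mul, Complex.norm_real, Real.norm_eq_abs, abs_of_nonneg h0] at h2
    nlinarith [norm_nonneg ζ]
  refine ⟨hd, ?_⟩
  rw [norm_div, div_lt_one (norm_pos_iff.2 hd)]
  rw [← sq_lt_sq₀ (norm_nonneg _) (norm_nonneg _), ← Complex.normSq_eq_norm_sq,
    ← Complex.normSq_eq_norm_sq, Complex.normSq_apply, Complex.normSq_apply]
  have h2 : ζ.re * ζ.re + ζ.im * ζ.im < 1 := by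
    rw [← Complex.normSq_apply, Complex.normSq_eq_norm_sq]
    nlinarith [norm_nonneg ζ]
  simp
  nlinarith [mul_pos (sub_pos.2 h2) (show 0 < 1 - s ^ 2 by nlinarith)]

lemma chain_of_disc_aux {D : Set E} {δ h : ℝ} (h0 : 0 ≤ h) (hδ : h ≤ δ) (k : ℕ) :
    ∀ φ : ℂ → E, DifferentiableOn ℂ φ (ball 0 1) → MapsTo φ (ball 0 1) D →
      DChain D δ (φ 0) (φ (Real.tanh (k * h) : ℂ)) (k * h) := by
  induction k with
  | zero => intro φ _ _; simpa using DChain.nil (φ 0)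
  | succ k ih =>
    intro φ hd hm
    have hs0 := my_tanh_nonneg h0
    have hs1 := Real.tanh_lt_one h
    have hmap : MapsTo (fun ζ : ℂ => (ζ + (Real.tanh h : ℝ)) / (1 + (Real.tanh h : ℝ) * ζ))
        (ball 0 1) (ball 0 1) := by
      intro ζ hζ
      rw [mem_ball_zero_iff] at *
      exact (aut_maps hs0 hs1 hζ).2
    have key := ih (fun ζ => φ ((ζ + (Real.tanh h : ℝ)) / (1 + (Real.tanh h : ℝ) * ζ)))
      (by
        refine hd.comp ?_ hmap
        intro ζ hζ
        rw [mem_ball_zero_iff] at hζ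
        apply DifferentiableAt.differentiableWithinAt
        exact DifferentiableAt.div (by fun_prop) (by fun_prop) (aut_maps hs0 hs1 hζ).1)
      (hm.comp hmap)
    have e1 : ((Real.tanh (k * h) : ℝ) + (Real.tanh h : ℝ) : ℂ) /
        (1 + (Real.tanh h : ℝ) * (Real.tanh (k * h) : ℝ)) = (Real.tanh ((k + 1 : ℕ) * h) : ℝ) := by
      rw [show ((k + 1 : ℕ) * h : ℝ) = k * h + h by push_cast; ring, my_tanh_add]
      push_cast; ring
    simp only [e1] at key
    rw [show ((k + 1 : ℕ) * h : ℝ) = h + k * h by push_cast; ring] at *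
    refine DChain.cons ⟨h0, hδ, φ, hd, hm, rfl, ?_⟩ key
    simp

lemma chain_of_disc {D : Set E} {δ : ℝ} (hδ : 0 < δ) {α : ℂ} (hα : ‖α‖ < 1) (φ : ℂ → E)
    (hd : DifferentiableOn ℂ φ (ball 0 1)) (hm : MapsTo φ (ball 0 1) D) :
    DChain D δ (φ 0) (φ α) (artanh ‖α‖) := by
  obtain ⟨u, hu, hua⟩ : ∃ u : ℂ, ‖u‖ = 1 ∧ u * ‖α‖ = α := by
    by_cases h : α = 0
    · exact ⟨1, by simp, by simp [h]⟩
    · have : (‖α‖ : ℂ) ≠ 0 := by simpa using h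
      exact ⟨α / ‖α‖, by simp [h], by field_simp⟩
  set t := artanh ‖α‖ with ht
  have ht0 : 0 ≤ t := my_artanh_nonneg (norm_nonneg _) hα
  obtain ⟨N, hN⟩ := exists_nat_gt (t / δ)
  have hN0 : (0 : ℝ) < N := lt_of_le_of_lt (by positivity) hN
  have hmap : MapsTo (fun ζ : ℂ => u * ζ) (ball 0 1) (ball 0 1) := by
    intro ζ hζ
    rw [mem_ball_zero_iff] at *
    rwa [norm_mul, hu, one_mul]
  have key := chain_of_disc_aux (D := D) (δ := δ) (h := t / N) (by positivity)
    (by rw [div_le_iff₀ hN0]; rw [div_lt_iff₀ hδ] at hN; linarith) N (fun ζ => φ (u * ζ))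
    (hd.comp (by fun_prop) hmap) (hm.comp hmap)
  rw [mul_div_cancel₀ _ hN0.ne'] at key
  simp only [mul_zero] at key
  rw [ht, my_tanh_artanh (norm_nonneg _) hα, hua] at key
  exact key

lemma lempert_nonneg (D : Set E) (z w : E) : 0 ≤ lempert D z w := by
  apply Real.sInf_nonneg
  rintro r ⟨α, hα, _, rfl⟩
  exact my_artanh_nonneg (norm_nonneg _) hα

lemma lempert_le {D : Set E} (α : ℂ) (hα : ‖α‖ < 1) (φ : ℂ → E)
    (hd : DifferentiableOn ℂ φ (ball 0 1)) (hm : MapsTo φ (ball 0 1) D) :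
    lempert D (φ 0) (φ α) ≤ artanh ‖α‖ := by
  apply csInf_le
  · refine ⟨0, ?_⟩
    rintro r ⟨α, hα, _, rfl⟩
    exact my_artanh_nonneg (norm_nonneg _) hα
  · exact ⟨α, hα, ⟨φ, hd, hm, rfl, rfl⟩, rfl⟩

lemma kob_bdd (D : Set E) (z w : E) : BddBelow { r : ℝ | ∃ (m : ℕ) (c : ℕ → E), c 0 = z ∧ c m = w ∧
    (∀ i ≤ m, c i ∈ D) ∧ r = ∑ i ∈ Finset.range m, lempert D (c i) (c (i + 1)) } := by
  refine ⟨0, ?_⟩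
  rintro r ⟨m, c, _, _, _, rfl⟩
  exact Finset.sum_nonneg fun _ _ => lempert_nonneg _ _ _

lemma kob_ne {D : Set E} {z w : E} (hz : z ∈ D) (hw : w ∈ D) :
    { r : ℝ | ∃ (m : ℕ) (c : ℕ → E), c 0 = z ∧ c m = w ∧
    (∀ i ≤ m, c i ∈ D) ∧ r = ∑ i ∈ Finset.range m, lempert D (c i) (c (i + 1)) }.Nonempty := by
  refine ⟨_, 1, fun i => if i = 0 then z else w, by simp, by simp, ?_, rfl⟩
  intro i _
  dsimp only
  split_ifs <;> assumption

lemma kob_le_lempert {D : Set E} {z w : E} (hz : z ∈ D) (hw : w ∈ D) :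
    kobayashi D z w ≤ lempert D z w := by
  apply csInf_le (kob_bdd D z w)
  refine ⟨1, fun i => if i = 0 then z else w, by simp, by simp, ?_, by simp⟩
  intro i _
  dsimp only
  split_ifs <;> assumption

lemma kob_self {D : Set E} {z : E} (hz : z ∈ D) : kobayashi D z z ≤ 0 := by
  apply csInf_le (kob_bdd D z z)
  exact ⟨0, fun _ => z, rfl, rfl, fun _ _ => hz, by simp⟩

lemma kob_tri {D : Set E} {x y z : E} (hx : x ∈ D) (hy : y ∈ D) (hz : z ∈ D) :
    kobayashi D x z ≤ kobayashi D x y + kobayashi D y z := by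
  apply le_of_forall_pos_le_add
  intro ε hε
  obtain ⟨r, ⟨m, c, c0, cm, cD, rfl⟩, hr⟩ := exists_lt_of_csInf_lt (kob_ne hx hy)
    (show kobayashi D x y < kobayashi D x y + ε / 2 by linarith)
  obtain ⟨r', ⟨m', c', c0', cm', cD', rfl⟩, hr'⟩ := exists_lt_of_csInf_lt (kob_ne hy hz)
    (show kobayashi D y z < kobayashi D y z + ε / 2 by linarith)
  have h : kobayashi D x z ≤ ∑ i ∈ Finset.range m, lempert D (c i) (c (i + 1)) +
      ∑ i ∈ Finset.range m', lempert D (c' i) (c' (i + 1)) := by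
    apply csInf_le (kob_bdd D x z)
    have hsec : ∀ j, (if m + j ≤ m then c (m + j) else c' (m + j - m)) = c' j := by
      intro j
      by_cases hj : j = 0
      · simp [hj, cm, c0']
      · rw [if_neg (by omega)]; congr 1; omega
    refine ⟨m + m', fun i => if i ≤ m then c i else c' (i - m), by simpa using c0, ?_, ?_, ?_⟩
    · rw [← cm']; exact hsec m'
    · intro i hi
      dsimp only
      split_ifs with h
      · exact cD i h
      · exact cD' _ (by omega)
    · rw [Finset.sum_range_add]
      congr 1
      · refine Finset.sum_congr rfl fun i hi => ?_
        have := Finset.mem_range.1 hi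
        dsimp only
        rw [if_pos (by omega), if_pos (by omega)]
      · refine Finset.sum_congr rfl fun i hi => ?_
        dsimp only
        rw [add_assoc, hsec, hsec]
  linarith

lemma chain_of_lempert {D : Set E} (hD : IsOpen D) (hc : IsConnected D) {δ : ℝ} (hδ : 0 < δ)
    {a b : E} (ha : a ∈ D) (hb : b ∈ D) {ε : ℝ} (hε : 0 < ε) :
    ∃ T, T ≤ lempert D a b + ε ∧ DChain D δ a b T := by
  obtain ⟨α, hα, h⟩ := exists_disc hD hc ha hb
  obtain ⟨r, ⟨β, hβ, ⟨φ, h1, h2, rfl, rfl⟩, rfl⟩, hr⟩ := exists_lt_of_csInf_lt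
    (⟨_, α, hα, h, rfl⟩ : { r : ℝ | ∃ α : ℂ, ‖α‖ < 1 ∧
    (∃ φ : ℂ → E, DifferentiableOn ℂ φ (ball 0 1) ∧ MapsTo φ (ball 0 1) D ∧
      φ 0 = a ∧ φ α = b) ∧ r = artanh ‖α‖ }.Nonempty)
    (show lempert D a b < lempert D a b + ε by linarith)
  exact ⟨_, hr.le, chain_of_disc hδ hβ φ h1 h2⟩

lemma chain_of_sum {D : Set E} (hD : IsOpen D) (hc : IsConnected D) {δ : ℝ} (hδ : 0 < δ)
    (c : ℕ → E) {ε : ℝ} (hε : 0 < ε) (m : ℕ) (h : ∀ i ≤ m, c i ∈ D) :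
    ∃ T, T ≤ ∑ i ∈ Finset.range m, lempert D (c i) (c (i + 1)) + m * ε ∧
      DChain D δ (c 0) (c m) T := by
  induction m with
  | zero => exact ⟨0, by simp, DChain.nil _⟩
  | succ m ih =>
    obtain ⟨T, hT, h1⟩ := ih fun i hi => h i (by omega)
    obtain ⟨T', hT', h2⟩ := chain_of_lempert hD hc hδ (h m (by omega)) (h (m + 1) le_rfl) hε
    refine ⟨T + T', ?_, h1.append h2⟩
    rw [Finset.sum_range_succ]
    push_cast
    linarith

/-- Lower bound principle. -/
lemma le_kobayashi {D : Set E} (hD : IsOpen D) (hc : IsConnected D) {δ : ℝ} (hδ : 0 < δ)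
    {z w : E} (hz : z ∈ D) (hw : w ∈ D) {A k : ℝ} (hA : 0 < A)
    (h : ∀ T, DChain D δ z w T → k ≤ A * T) : 1 / A * k ≤ kobayashi D z w := by
  apply le_csInf (kob_ne hz hw)
  rintro r ⟨m, c, rfl, rfl, cD, rfl⟩
  apply le_of_forall_pos_le_add
  intro ε hε
  obtain ⟨T, hT, hch⟩ := chain_of_sum hD hc hδ c (ε := ε / (m + 1)) (by positivity) m cD
  have h1 := h T hch
  have h2 : (m : ℝ) * (ε / (m + 1)) ≤ ε := by
    rw [mul_div_assoc', div_le_iff₀ (by positivity)]; nlinarith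
  rw [one_div, inv_mul_le_iff₀ hA]
  refine h1.trans ?_
  gcongr
  linarith

end

section
variable {E : Type*} [NormedAddCommGroup E] [NormedSpace ℂ E]

lemma disc_dist {D : Set E} {M : ℝ} (hM : ∀ a ∈ D, D ⊆ closedBall a M) {φ : ℂ → E}
    (hd : DifferentiableOn ℂ φ (ball 0 1)) (hm : MapsTo φ (ball 0 1) D) {ζ : ℂ} (hζ : ‖ζ‖ < 1) :
    dist (φ ζ) (φ 0) ≤ M * ‖ζ‖ := by
  have h0 : φ 0 ∈ D := hm (by simp)
  have := Complex.dist_le_div_mul_dist_of_mapsTo_ball (R₂ := M) hd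
    (fun x hx => hM _ h0 (hm hx)) (z := ζ) (by simpa using hζ)
  simpa using this

lemma norm_tanh {t : ℝ} (h0 : 0 ≤ t) : ‖((Real.tanh t : ℝ) : ℂ)‖ = Real.tanh t := by
  rw [Complex.norm_real, Real.norm_eq_abs, abs_of_nonneg (my_tanh_nonneg h0)]

lemma step_dist {D : Set E} {M : ℝ} (hM0 : 0 < M) (hM : ∀ a ∈ D, D ⊆ closedBall a M) {δ t : ℝ}
    {a b : E} (h : DStep D δ a b t) : dist b a ≤ 2 * M * t := by
  obtain ⟨h0, h1, φ, hd, hm, rfl, rfl⟩ := h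
  have := disc_dist hM hd hm (ζ := (Real.tanh t : ℝ))
    (by rw [norm_tanh h0]; exact Real.tanh_lt_one t)
  rw [norm_tanh h0] at this
  nlinarith [my_tanh_le h0]

lemma step_mem {D : Set E} {δ t : ℝ} {a b : E} (h : DStep D δ a b t) : a ∈ D ∧ b ∈ D := by
  obtain ⟨h0, h1, φ, hd, hm, rfl, rfl⟩ := h
  exact ⟨hm (by simp), hm (by rw [mem_ball_zero_iff, norm_tanh h0]; exact Real.tanh_lt_one t)⟩

lemma step_loc {D U : Set E} {M : ℝ} (hM0 : 0 < M) (hM : ∀ a ∈ D, D ⊆ closedBall a M)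
    {η ρ : ℝ} (hρ : 0 < ρ) (hρ1 : ρ ≤ 1) (hMρ : M * ρ ≤ η) {t : ℝ} {a b : E}
    (h : DStep D (ρ / 4) a b t) (hU : ball a η ⊆ U) :
    b ∈ connectedComponentIn (D ∩ U) a ∧ kobayashi (connectedComponentIn (D ∩ U) a) a b ≤ 4 / ρ * t := by
  obtain ⟨h0, h1, φ, hd, hm, rfl, rfl⟩ := h
  have hmap : MapsTo (fun ζ : ℂ => (ρ : ℂ) * ζ) (ball 0 1) (ball 0 1) := by
    intro ζ hζ
    rw [mem_ball_zero_iff] at *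
    rw [norm_mul, Complex.norm_real, Real.norm_eq_abs, abs_of_pos hρ]
    nlinarith [norm_nonneg ζ]
  have hd' : DifferentiableOn ℂ (fun ζ : ℂ => φ (ρ * ζ)) (ball 0 1) := hd.comp (by fun_prop) hmap
  have hη : 0 < η := lt_of_lt_of_le (by positivity) hMρ
  have hmU : MapsTo (fun ζ : ℂ => φ (ρ * ζ)) (ball 0 1) (D ∩ U) := by
    intro ζ hζ
    have h2 := hmap hζ
    refine ⟨hm h2, hU ?_⟩
    rw [mem_ball_zero_iff] at *
    have := disc_dist hM hd hm h2
    rw [mem_ball]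
    refine this.trans_lt ?_
    rw [norm_mul, Complex.norm_real, Real.norm_eq_abs, abs_of_pos hρ, ← mul_assoc]
    have : 0 < M * ρ := by positivity
    nlinarith [norm_nonneg ζ]
  have hmC : MapsTo (fun ζ : ℂ => φ (ρ * ζ)) (ball 0 1) (connectedComponentIn (D ∩ U) (φ 0)) := by
    rw [mapsTo_iff_image_subset]
    refine IsPreconnected.subset_connectedComponentIn
      ((convex_ball (0 : ℂ) 1).isPreconnected.image _ hd'.continuousOn) ⟨0, by simp, by simp⟩ ?_
    exact mapsTo_iff_image_subset.1 hmU
  have hx : Real.tanh t / ρ ≤ 1 / 2 := by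
    rw [div_le_iff₀ hρ]; linarith [my_tanh_le h0]
  have hx0 : 0 ≤ Real.tanh t / ρ := div_nonneg (my_tanh_nonneg h0) hρ.le
  have hn : ‖((Real.tanh t / ρ : ℝ) : ℂ)‖ = Real.tanh t / ρ := by
    rw [Complex.norm_real, Real.norm_eq_abs, abs_of_nonneg hx0]
  have hlt : ‖((Real.tanh t / ρ : ℝ) : ℂ)‖ < 1 := by rw [hn]; linarith
  have e : (ρ : ℂ) * ((Real.tanh t / ρ : ℝ) : ℂ) = (Real.tanh t : ℝ) := by
    rw [← Complex.ofReal_mul]; congr 1; field_simp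
  have hb := hmC (mem_ball_zero_iff.2 hlt)
  have ha := hmC (mem_ball_self one_pos)
  have hl := lempert_le _ hlt _ hd' hmC
  simp only [e, mul_zero] at hb ha hl
  refine ⟨hb, (kob_le_lempert ha hb).trans (hl.trans ?_)⟩
  rw [hn]
  refine (my_artanh_le hx0 hx).trans ?_
  rw [mul_div_assoc', div_mul_eq_mul_div]
  apply div_le_div_of_nonneg_right _ hρ.le
  linarith [my_tanh_le h0]

lemma chain_nonneg {D : Set E} {δ : ℝ} {a w : E} {T : ℝ} (h : DChain D δ a w T) : 0 ≤ T := by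
  induction h with
  | nil a => exact le_rfl
  | cons hs _ ih => exact add_nonneg hs.1 ih

/-- Head of a chain. -/
lemma chain_head {D U W₁ W₂ : Set E} {M : ℝ} (hM0 : 0 < M) (hM : ∀ a ∈ D, D ⊆ closedBall a M)
    {η ρ : ℝ} (hρ : 0 < ρ) (hρ1 : ρ ≤ 1) (hMρ : M * ρ ≤ η)
    (h12 : ∀ a ∈ W₁, ball a η ⊆ W₂) (h2U : ∀ a ∈ W₂, ball a η ⊆ U)
    {a w : E} {T : ℝ} (h : DChain D (ρ / 4) a w T) :
    a ∈ W₁ → a ∈ D →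
      (w ∈ connectedComponentIn (D ∩ U) a ∧
        kobayashi (connectedComponentIn (D ∩ U) a) a w ≤ 4 / ρ * T) ∨
      ∃ p ∈ connectedComponentIn (D ∩ U) a, p ∈ W₂ ∧ p ∉ W₁ ∧
        kobayashi (connectedComponentIn (D ∩ U) a) a p ≤ 4 / ρ * T ∧ dist p a ≤ 2 * M * T := by
  have hη : 0 < η := lt_of_lt_of_le (by positivity) hMρ
  induction h with
  | nil a =>
    intro ha haD
    have h2 : a ∈ W₂ := h12 a ha (mem_ball_self hη)
    have h3 : a ∈ connectedComponentIn (D ∩ U) a :=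
      mem_connectedComponentIn ⟨haD, h2U a h2 (mem_ball_self hη)⟩
    exact Or.inl ⟨h3, by simpa using kob_self h3⟩
  | @cons a b c t T hs hch ih =>
    intro ha haD
    have h2 : a ∈ W₂ := h12 a ha (mem_ball_self hη)
    have h3 : a ∈ connectedComponentIn (D ∩ U) a :=
      mem_connectedComponentIn ⟨haD, h2U a h2 (mem_ball_self hη)⟩
    obtain ⟨hb, hk⟩ := step_loc hM0 hM hρ hρ1 hMρ hs (h2U a h2)
    have hdist := step_dist hM0 hM hs
    have hT := chain_nonneg hch
    have hMT : 0 ≤ 2 * M * T := by positivity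
    have hCT : 0 ≤ 4 / ρ * T := by positivity
    have heq := connectedComponentIn_eq hb
    by_cases hbW : b ∈ W₁
    · rw [← heq] at ih
      rcases ih hbW (step_mem hs).2 with ⟨h4, h5⟩ | ⟨p, hp, hp2, hp1, hpk, hpd⟩
      · left
        refine ⟨h4, (kob_tri h3 hb h4).trans ?_⟩
        linarith
      · right
        refine ⟨p, hp, hp2, hp1, (kob_tri h3 hb hp).trans (by linarith), ?_⟩
        have := dist_triangle p b a
        linarith
    · right
      refine ⟨b, hb, h12 a ha ?_, hbW, by linarith, by linarith⟩
      rw [mem_ball]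
      refine hdist.trans_lt ?_
      have := hs.2.1
      have : 0 < M * ρ := by positivity
      nlinarith

/-- Tail of a chain. -/
lemma chain_tail {D U W₁ W₂ : Set E} {M : ℝ} (hM0 : 0 < M) (hM : ∀ a ∈ D, D ⊆ closedBall a M)
    {η ρ : ℝ} (hρ : 0 < ρ) (hρ1 : ρ ≤ 1) (hMρ : M * ρ ≤ η)
    (h12 : ∀ a ∈ W₁, ball a η ⊆ W₂) (h2U : ∀ a ∈ W₂, ball a η ⊆ U)
    {a w : E} {T : ℝ} (h : DChain D (ρ / 4) a w T) :
    w ∈ W₁ → w ∈ D →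
      (a ∈ connectedComponentIn (D ∩ U) w ∧ a ∈ W₁ ∧
        kobayashi (connectedComponentIn (D ∩ U) w) a w ≤ 4 / ρ * T) ∨
      ∃ p ∈ connectedComponentIn (D ∩ U) w, p ∈ W₂ ∧ p ∉ W₁ ∧
        kobayashi (connectedComponentIn (D ∩ U) w) p w ≤ 4 / ρ * T := by
  have hη : 0 < η := lt_of_lt_of_le (by positivity) hMρ
  induction h with
  | nil a =>
    intro ha haD
    have h2 : a ∈ W₂ := h12 a ha (mem_ball_self hη)
    have h3 : a ∈ connectedComponentIn (D ∩ U) a :=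
      mem_connectedComponentIn ⟨haD, h2U a h2 (mem_ball_self hη)⟩
    exact Or.inl ⟨h3, ha, by simpa using kob_self h3⟩
  | @cons a b c t T hs hch ih =>
    intro hc hcD
    have hc3 : c ∈ connectedComponentIn (D ∩ U) c :=
      mem_connectedComponentIn ⟨hcD, h2U c (h12 c hc (mem_ball_self hη)) (mem_ball_self hη)⟩
    have hdist := step_dist hM0 hM hs
    have hCt : 0 ≤ 4 / ρ * t := by have := hs.1; positivity
    rcases ih hc hcD with ⟨hb, hbW, hk⟩ | ⟨p, hp, hp2, hp1, hpk⟩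
    · have h2 : a ∈ W₂ := by
        apply h12 b hbW
        rw [mem_ball, dist_comm]
        refine hdist.trans_lt ?_
        have := hs.2.1
        have : 0 < M * ρ := by positivity
        nlinarith
      have haU : a ∈ D ∩ U := ⟨(step_mem hs).1, h2U a h2 (mem_ball_self hη)⟩
      have h3 : a ∈ connectedComponentIn (D ∩ U) a := mem_connectedComponentIn haU
      obtain ⟨hb', hk'⟩ := step_loc hM0 hM hρ hρ1 hMρ hs (h2U a h2)
      have heq : connectedComponentIn (D ∩ U) a = connectedComponentIn (D ∩ U) c :=
        (connectedComponentIn_eq hb').trans (connectedComponentIn_eq hb).symm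
      rw [heq] at h3 hb' hk'
      have hk2 := kob_tri h3 hb' hc3
      by_cases haW : a ∈ W₁
      · exact Or.inl ⟨h3, haW, by linarith⟩
      · exact Or.inr ⟨a, h3, h2, haW, by linarith⟩
    · exact Or.inr ⟨p, hp, hp2, hp1, by linarith⟩

lemma ball_bridge {O : Set E} {x a p : E} {r : ℝ} (ha : a ∈ connectedComponentIn O x)
    (hr : ball a r ⊆ O) (hp : dist p a < r / 2) :
    p ∈ connectedComponentIn O x ∧ kobayashi (connectedComponentIn O x) a p ≤ artanh (1 / 2) := by
  have hr0 : 0 < r := by have := dist_nonneg (x := p) (y := a); linarith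
  have hsub : ball a r ⊆ connectedComponentIn O x := by
    rw [connectedComponentIn_eq ha]
    letI : NormedSpace ℝ E := NormedSpace.complexToReal
    exact (convex_ball a r).isPreconnected.subset_connectedComponentIn (mem_ball_self hr0) hr
  have hpm : p ∈ connectedComponentIn O x := hsub (by rw [mem_ball]; linarith)
  refine ⟨hpm, (kob_le_lempert ha hpm).trans ?_⟩
  have h := lempert_le (D := connectedComponentIn O x) (1 / 2 : ℂ) (by norm_num)
    (fun ζ : ℂ => a + (2 * ζ) • (p - a)) (by fun_prop) (by
      intro ζ hζ
      rw [mem_ball_zero_iff] at hζ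
      apply hsub
      rw [mem_ball, dist_eq_norm, add_sub_cancel_left, norm_smul, norm_mul]
      rw [dist_eq_norm] at hp
      simp only [Complex.norm_ofNat]
      nlinarith [norm_nonneg ζ, norm_nonneg (p - a)])
  simpa using h

lemma shell_bound {O S : Set E} (hO : IsOpen O) (hS : IsCompact S) (hSO : S ⊆ O) :
    ∃ B : ℝ, 0 ≤ B ∧ ∀ x, ∀ a ∈ connectedComponentIn O x, ∀ b ∈ connectedComponentIn O x,
      a ∈ S → b ∈ S → kobayashi (connectedComponentIn O x) a b ≤ B := by
  obtain ⟨r, hr, hrO⟩ := hS.exists_thickening_subset_open hO hSO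
  have hball : ∀ a ∈ S, ball a r ⊆ O := fun a ha => (ball_subset_thickening ha r).trans hrO
  obtain ⟨F, hFS, hF, hcov⟩ := hS.finite_cover_balls (half_pos hr)
  let B₀ : ℝ := ∑ p ∈ hF.toFinset, ∑ q ∈ hF.toFinset, |kobayashi (connectedComponentIn O p) p q|
  have hB₀ : ∀ p ∈ F, ∀ q ∈ F, kobayashi (connectedComponentIn O p) p q ≤ B₀ := by
    intro p hp q hq
    have h1 : |kobayashi (connectedComponentIn O p) p q| ≤
        ∑ q ∈ hF.toFinset, |kobayashi (connectedComponentIn O p) p q| :=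
      Finset.single_le_sum (f := fun q => |kobayashi (connectedComponentIn O p) p q|)
        (fun _ _ => abs_nonneg _) (hF.mem_toFinset.2 hq)
    have h2 := Finset.single_le_sum (s := hF.toFinset)
      (f := fun p => ∑ q ∈ hF.toFinset, |kobayashi (connectedComponentIn O p) p q|)
      (fun _ _ => Finset.sum_nonneg fun _ _ => abs_nonneg _) (hF.mem_toFinset.2 hp)
    exact (le_abs_self _).trans (h1.trans h2)
  have hB0' : 0 ≤ B₀ := Finset.sum_nonneg fun _ _ => Finset.sum_nonneg fun _ _ => abs_nonneg _
  have hat : 0 ≤ artanh (1 / 2) := my_artanh_nonneg (by norm_num) (by norm_num)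
  refine ⟨artanh (1 / 2) + (B₀ + artanh (1 / 2)), by linarith, ?_⟩
  intro x a ha b hb haS hbS
  obtain ⟨p, hp, hap⟩ := mem_iUnion₂.1 (hcov haS)
  obtain ⟨q, hq, hbq⟩ := mem_iUnion₂.1 (hcov hbS)
  rw [mem_ball] at hap hbq
  obtain ⟨hpx, hk1⟩ := ball_bridge ha (hball a haS) (p := p) (by rwa [dist_comm])
  obtain ⟨hqx, -⟩ := ball_bridge hb (hball b hbS) (p := q) (by rwa [dist_comm])
  obtain ⟨-, hk3⟩ := ball_bridge hqx (hball q (hFS hq)) hbq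
  have hk2 := hB₀ p hp q hq
  rw [← connectedComponentIn_eq hpx] at hk2
  have h1 := kob_tri ha hpx hb
  have h2 := kob_tri hpx hqx hb
  linarith

end

/-- **Proposition A4.** Let `D` be a bounded domain in `ℂⁿ` and `U, V` open
neighborhoods of `∂D` with `cl(V)` a compact subset of `U`. Then there is a constant
`c > 0` such that for every connected component `D'` of `D ∩ U` one has
`c · k_{D'}(z,w) ≤ k_D(z,w)` for all `z, w ∈ D' ∩ V`. -/
theorem kobayashi_localization
    (n : ℕ) (D : Set (EuclideanSpace ℂ (Fin n)))
    (hDopen : IsOpen D) (hDconn : IsConnected D) (hDbdd : Bornology.IsBounded D)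
    (U V : Set (EuclideanSpace ℂ (Fin n))) (hU : IsOpen U) (hV : IsOpen V)
    (hUfr : frontier D ⊆ U) (hVfr : frontier D ⊆ V)
    (hVU : closure V ⊆ U) (hVcpt : IsCompact (closure V)) :
    ∃ c : ℝ, 0 < c ∧ ∀ x ∈ D ∩ U,
      ∀ z ∈ connectedComponentIn (D ∩ U) x ∩ V,
        ∀ w ∈ connectedComponentIn (D ∩ U) x ∩ V,
          c * kobayashi (connectedComponentIn (D ∩ U) x) z w ≤ kobayashi D z w := by
  obtain ⟨η', hη', hη'U⟩ := hVcpt.exists_thickening_subset_open hU hVU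
  obtain ⟨η, hη, h3η⟩ : ∃ η : ℝ, 0 < η ∧ 3 * η = η' := ⟨η' / 3, by positivity, by ring⟩
  obtain ⟨M₀, hM₀⟩ := hDbdd.subset_closedBall (0 : EuclideanSpace ℂ (Fin n))
  obtain ⟨M, hM0, hM⟩ : ∃ M : ℝ, 0 < M ∧ ∀ a ∈ D, D ⊆ closedBall a M := by
    refine ⟨2 * |M₀| + 1, by positivity, fun a ha b hb => ?_⟩
    have h1 := hM₀ ha
    have h2 := hM₀ hb
    rw [mem_closedBall] at *
    have := dist_triangle_right b a 0
    have := le_abs_self M₀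
    linarith
  obtain ⟨ρ, hρ, hρ1, hMρ⟩ : ∃ ρ : ℝ, 0 < ρ ∧ ρ ≤ 1 ∧ M * ρ ≤ η := by
    refine ⟨min 1 (η / M), lt_min one_pos (by positivity), min_le_left _ _, ?_⟩
    calc M * min 1 (η / M) ≤ M * (η / M) := by gcongr; exact min_le_right _ _
      _ = η := by field_simp
  have h12 : ∀ a ∈ thickening η V, ball a η ⊆ thickening (2 * η) V := by
    intro a ha b hb
    obtain ⟨v, hv, hav⟩ := mem_thickening_iff.1 ha
    rw [mem_ball] at hb
    exact mem_thickening_iff.2 ⟨v, hv, by linarith [dist_triangle b a v]⟩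
  have h2U : ∀ a ∈ thickening (2 * η) V, ball a η ⊆ U := by
    intro a ha b hb
    obtain ⟨v, hv, hav⟩ := mem_thickening_iff.1 ha
    rw [mem_ball] at hb
    exact hη'U (mem_thickening_iff.2 ⟨v, subset_closure hv, by linarith [dist_triangle b a v]⟩)
  have hV1 : V ⊆ thickening η V := self_subset_thickening hη V
  let S : Set (EuclideanSpace ℂ (Fin n)) := (closure D ∩ cthickening (2 * η) V) \ thickening η V
  have hS : IsCompact S :=
    (hDbdd.isCompact_closure.inter_right isClosed_cthickening).diff isOpen_thickening
  have hSO : S ⊆ D ∩ U := by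
    rintro p ⟨⟨hp1, hp2⟩, hp3⟩
    constructor
    · by_contra hpD
      apply hp3
      apply hV1
      apply hVfr
      rw [hDopen.frontier_eq]
      exact ⟨hp1, hpD⟩
    · apply hη'U
      have : p ∈ thickening η' V := cthickening_subset_thickening' (by linarith) (by linarith) V hp2
      exact thickening_subset_of_subset _ subset_closure this
  obtain ⟨B, hB, hkB⟩ := shell_bound (hDopen.inter hU) hS hSO
  have hA : 0 < 8 / ρ + 2 * M * B / η := by positivity
  refine ⟨1 / (8 / ρ + 2 * M * B / η), by positivity, ?_⟩
  intro x hx z hz w hw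
  obtain ⟨hz, hzV⟩ := hz
  obtain ⟨hw, hwV⟩ := hw
  have hzD : z ∈ D := (connectedComponentIn_subset _ _ hz).1
  have hwD : w ∈ D := (connectedComponentIn_subset _ _ hw).1
  refine le_kobayashi hDopen hDconn (δ := ρ / 4) (by positivity) hzD hwD hA ?_
  intro T hT
  have hT0 := chain_nonneg hT
  have hhead := chain_head hM0 hM hρ hρ1 hMρ h12 h2U hT (hV1 hzV) hzD
  have htail := chain_tail hM0 hM hρ hρ1 hMρ h12 h2U hT (hV1 hwV) hwD
  rw [← connectedComponentIn_eq hz] at hhead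
  rw [← connectedComponentIn_eq hw] at htail
  have e8 : 8 / ρ * T = 4 / ρ * T + 4 / ρ * T := by ring
  have hCT : 0 ≤ 4 / ρ * T := by positivity
  have hBT : 0 ≤ 2 * M * B / η * T := by positivity
  rw [add_mul]
  rcases hhead with ⟨-, h⟩ | ⟨p, hp, hp2, hp1, hpk, hpd⟩
  · linarith
  rcases htail with ⟨-, -, h⟩ | ⟨q, hq, hq2, hq1, hqk⟩
  · linarith
  have hmemS : ∀ y ∈ connectedComponentIn (D ∩ U) x, y ∈ thickening (2 * η) V →
      y ∉ thickening η V → y ∈ S := fun y hy h2 h1 =>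
    ⟨⟨subset_closure (connectedComponentIn_subset _ _ hy).1,
      thickening_subset_cthickening _ _ h2⟩, h1⟩
  have hpq := hkB x p hp q hq (hmemS p hp hp2 hp1) (hmemS q hq hq2 hq1)
  have hηp : η ≤ 2 * M * T := by
    by_contra hlt
    exact hp1 (mem_thickening_iff.2 ⟨z, hzV, by linarith⟩)
  have hBB : B ≤ 2 * M * B / η * T := by
    rw [div_mul_eq_mul_div, le_div_iff₀ hη]
    nlinarith
  have h1 := kob_tri hz hp hw
  have h2 := kob_tri hp hq hw
  linarith
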